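/- Let A be a complex Banach algebra satisfying the homotopy conditions below with constants c₁, c₂, and let n ≥ 0. For every cyclic (n+2)-cocycle ψ ∈ Z^{n+2}_λ(A) there exist χ ∈ C^{n+1}_λ(A) and a cyclic cocycle φ ∈ Zⁿ_λ(A) such that ψ = S̃φ + δχ, with ‖χ‖ ≤ (n+1)² c₁c₂ ‖ψ‖ and ‖φ‖ ≤ c₁c₂ ‖ψ‖. -/

import Mathlib

/-- `Coch A n` is `Cⁿ(A)`: the Banach space of bounded `(n+1)`-multilinear
functionals on `A`.  In particular `Coch A 1` is the space of bounded bilinear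
functionals on `A × A`, i.e. the dual of the projective tensor product `A ⊗̂ A`. -/
abbrev Coch (A : Type*) [NonUnitalNormedRing A] [NormedSpace ℂ A] (n : ℕ) :=
  ContinuousMultilinearMap ℂ (fun _ : Fin (n + 1) => A) ℂ

variable {A : Type*} [NonUnitalNormedRing A] [NormedSpace ℂ A]

/-- The `j`-th face `(a₀, …, aⱼaⱼ₊₁, …, a_{n+1})` of a tuple. -/
def hochFace {n : ℕ} (a : Fin (n + 2) → A) (j : Fin (n + 1)) : Fin (n + 1) → A :=
  fun i =>
    if (i : ℕ) < (j : ℕ) then a i.castSucc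
    else if (i : ℕ) = (j : ℕ) then a i.castSucc * a i.succ
    else a i.succ

/-- The truncated Hochschild coboundary `δ'`. -/
noncomputable def hochDelta' (n : ℕ) (φ : (Fin (n + 1) → A) → ℂ) :
    (Fin (n + 2) → A) → ℂ :=
  fun a => ∑ j : Fin (n + 1), (-1 : ℂ) ^ (j : ℕ) * φ (hochFace a j)

/-- The Hochschild coboundary `δ`. -/
noncomputable def hochDelta (n : ℕ) (φ : (Fin (n + 1) → A) → ℂ) :
    (Fin (n + 2) → A) → ℂ :=
  fun a => hochDelta' n φ a +
    (-1 : ℂ) ^ (n + 1) *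
      φ (fun i => if i = 0 then a (Fin.last (n + 1)) * a 0 else a i.castSucc)

/-- The signed cyclic shift `t`: `tψ(a₀,…,aₙ) = (−1)ⁿ ψ(aₙ,a₀,…,a_{n−1})`. -/
noncomputable def cycT (n : ℕ) (φ : (Fin (n + 1) → A) → ℂ) :
    (Fin (n + 1) → A) → ℂ :=
  fun a => (-1 : ℂ) ^ n * φ (fun i => a (i - 1))

/-- The averaging operator `N = (n+1)⁻¹ ∑_{k=0}^{n} tᵏ` in degree `n`. -/
noncomputable def cycN (n : ℕ) (φ : (Fin (n + 1) → A) → ℂ) :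
    (Fin (n + 1) → A) → ℂ :=
  fun a => ((n : ℂ) + 1)⁻¹ * ∑ k ∈ Finset.range (n + 1), (cycT n)^[k] φ a

/-- The operator `h = −2(n+1)⁻¹ ∑_{k=1}^{n} k tᵏ` in degree `n`. -/
noncomputable def cycH (n : ℕ) (φ : (Fin (n + 1) → A) → ℂ) :
    (Fin (n + 1) → A) → ℂ :=
  fun a => (-2 / ((n : ℂ) + 1)) * ∑ k ∈ Finset.range (n + 1), (k : ℂ) * (cycT n)^[k] φ a

/-- The shift map `S̃ψ = N(δ(h(δ'ψ)))` on cyclic `n`-cochains. -/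
noncomputable def cycS (n : ℕ) (φ : (Fin (n + 1) → A) → ℂ) :
    (Fin (n + 3) → A) → ℂ :=
  cycN (n + 2) (hochDelta (n + 1) (cycH (n + 1) (hochDelta' n φ)))

/-!
The cochain operators satisfy `(1 - t)δ = δ'(1 - t)` and `h(1 - t) = (1 - t)h = 2(1 - N)`. Given a
cyclic cocycle `ψ`, choose `θ` with `δθ = ψ`; then `δ'(1 - t)θ = (1 - t)ψ = 0`, so there is `ρ` with
`δ'ρ = (1 - t)θ`. Replacing `θ` by `η = θ - ½ δhρ` keeps `δη = ψ` and makes `ρ` cyclic: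
`δ'Nρ = (1 - t)η`. With `φ = ½ Nρ` this gives `hδ'φ = (1 - N)η`, hence
`S̃φ = N(ψ - δNη) = ψ - δNη`, so `χ = Nη` works. Finally, for a cyclic `φ`, both `Nδφ` and `Nδ'φ`
are nonzero multiples of `N` applied to the zeroth face of `φ`, so `Nδ'φ = 0` forces
`δφ = Nδφ = 0`.
-/

section CyclicOperators

variable {𝕜 R : Type*} [Field 𝕜] [Ring R] [Algebra 𝕜 R]

variable (𝕜) in
/-- The mean `m⁻¹ ∑_{k < m} tᵏ` of the powers of an element `t` with `tᵐ = 1`; for the cyclic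
shift in degree `n`, where `m = n + 1`, it is the projection `N` onto cyclic cochains. -/
def cyclicMean (t : R) (m : ℕ) : R :=
  (m : 𝕜)⁻¹ • ∑ k ∈ Finset.range m, t ^ k

variable (𝕜) in
/-- The element `-2 m⁻¹ ∑_{k < m} k tᵏ`, which up to the factor `2` inverts `1 - t` on the
complement of the `t`-fixed part; for the cyclic shift in degree `n`, where `m = n + 1`, it is the
operator `h`. -/
def cyclicContraction (t : R) (m : ℕ) : R :=
  (-2 / (m : 𝕜)) • ∑ k ∈ Finset.range m, (k : 𝕜) • t ^ k

lemma mul_geom_sum_of_pow_eq_one {t : R} {m : ℕ} (ht : t ^ m = 1) :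
    t * ∑ k ∈ Finset.range m, t ^ k = ∑ k ∈ Finset.range m, t ^ k := by
  have h := mul_neg_geom_sum t m
  rwa [ht, sub_self, sub_mul, one_mul, sub_eq_zero, eq_comm] at h

lemma geom_sum_mul_of_pow_eq_one {t : R} {m : ℕ} (ht : t ^ m = 1) :
    (∑ k ∈ Finset.range m, t ^ k) * t = ∑ k ∈ Finset.range m, t ^ k := by
  have h := geom_sum_mul_neg t m
  rwa [ht, sub_self, mul_sub, mul_one, sub_eq_zero, eq_comm] at h

lemma sum_smul_pow_mul_one_sub (t : R) (m : ℕ) :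
    (∑ k ∈ Finset.range m, (k : 𝕜) • t ^ k) * (1 - t) =
      t * ∑ k ∈ Finset.range m, t ^ k - (m : 𝕜) • t ^ m := by
  induction m with
  | zero => simp
  | succ m ih =>
    rw [Finset.sum_range_succ, Finset.sum_range_succ, add_mul, ih, mul_sub, mul_one, mul_add,
      smul_mul_assoc, ← pow_succ, ← pow_succ', Nat.cast_succ]
    module

lemma mul_cyclicMean {t : R} {m : ℕ} (ht : t ^ m = 1) :
    t * cyclicMean 𝕜 t m = cyclicMean 𝕜 t m := by
  rw [cyclicMean, mul_smul_comm, mul_geom_sum_of_pow_eq_one ht]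

lemma cyclicMean_mul {t : R} {m : ℕ} (ht : t ^ m = 1) :
    cyclicMean 𝕜 t m * t = cyclicMean 𝕜 t m := by
  rw [cyclicMean, smul_mul_assoc, geom_sum_mul_of_pow_eq_one ht]

lemma cyclicContraction_mul_one_sub {t : R} {m : ℕ} (hm : (m : 𝕜) ≠ 0) (ht : t ^ m = 1) :
    cyclicContraction 𝕜 t m * (1 - t) = (2 : 𝕜) • (1 - cyclicMean 𝕜 t m) := by
  rw [cyclicContraction, cyclicMean, smul_mul_assoc, sum_smul_pow_mul_one_sub,
    mul_geom_sum_of_pow_eq_one ht, ht]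
  match_scalars <;> field_simp

lemma one_sub_mul_cyclicContraction {t : R} {m : ℕ} (hm : (m : 𝕜) ≠ 0) (ht : t ^ m = 1) :
    (1 - t) * cyclicContraction 𝕜 t m = (2 : 𝕜) • (1 - cyclicMean 𝕜 t m) := by
  rw [← cyclicContraction_mul_one_sub hm ht]
  have h : Commute t (cyclicContraction 𝕜 t m) :=
    (Commute.sum_right _ _ _ fun k _ => (Commute.self_pow t k).smul_right _).smul_right _
  exact ((Commute.one_left _).sub_left h).eq

end CyclicOperators

section CyclicOperatorNorms

variable {𝕜 R : Type*} [RCLike 𝕜] [NormedRing R] [NormedAlgebra 𝕜 R]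

lemma norm_cyclicMean_le {t : R} (ht : ∀ k, ‖t ^ k‖ ≤ 1) (m : ℕ) :
    ‖cyclicMean 𝕜 t m‖ ≤ 1 := by
  have hsum : ‖∑ k ∈ Finset.range m, t ^ k‖ ≤ m := by
    simpa using norm_sum_le_of_le (Finset.range m) fun k _ => ht k
  rw [cyclicMean, norm_smul, norm_inv, RCLike.norm_natCast]
  exact inv_mul_le_one_of_le₀ hsum m.cast_nonneg

lemma norm_cyclicContraction_le {t : R} (ht : ∀ k, ‖t ^ k‖ ≤ 1) (n : ℕ) :
    ‖cyclicContraction 𝕜 t (n + 1)‖ ≤ n := by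
  have hsum : ‖∑ k ∈ Finset.range (n + 1), (k : 𝕜) • t ^ k‖ ≤ (n + 1) * n / 2 := by
    calc ‖∑ k ∈ Finset.range (n + 1), (k : 𝕜) • t ^ k‖
        ≤ ∑ k ∈ Finset.range (n + 1), (k : ℝ) := norm_sum_le_of_le _ fun k _ => by
          rw [norm_smul, RCLike.norm_natCast]
          exact mul_le_of_le_one_right k.cast_nonneg (ht k)
      _ = (n + 1) * n / 2 := by
          rw [eq_div_iff two_ne_zero, ← Nat.cast_sum]
          exact_mod_cast Finset.sum_range_id_mul_two (n + 1)
  rw [cyclicContraction, norm_smul, norm_div, norm_neg, RCLike.norm_ofNat, RCLike.norm_natCast,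
    Nat.cast_succ]
  calc 2 / ((n : ℝ) + 1) * ‖∑ k ∈ Finset.range (n + 1), (k : 𝕜) • t ^ k‖
      ≤ 2 / ((n : ℝ) + 1) * ((n + 1) * n / 2) := by gcongr
    _ = n := by field_simp

end CyclicOperatorNorms

section CyclicOperatorApply

variable {𝕜 V : Type*} [RCLike 𝕜] [NormedAddCommGroup V] [NormedSpace 𝕜 V]

lemma norm_pow_le_one_of_isometry {t : V →L[𝕜] V} (ht : ∀ x, ‖t x‖ = ‖x‖) (k : ℕ) :
    ‖t ^ k‖ ≤ 1 := by
  refine ContinuousLinearMap.opNorm_le_bound _ zero_le_one fun x => ?_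
  rw [one_mul]
  induction k with
  | zero => exact le_rfl
  | succ k ih => rwa [pow_succ', mul_apply_eq_comp, ht]

lemma norm_cyclicMean_apply_le {t : V →L[𝕜] V} (ht : ∀ x, ‖t x‖ = ‖x‖) (m : ℕ) (x : V) :
    ‖cyclicMean 𝕜 t m x‖ ≤ ‖x‖ := by
  simpa using (cyclicMean 𝕜 t m).le_of_opNorm_le
    (norm_cyclicMean_le (norm_pow_le_one_of_isometry ht) m) x

lemma norm_cyclicContraction_apply_le {t : V →L[𝕜] V} (ht : ∀ x, ‖t x‖ = ‖x‖) (n : ℕ) (x : V) :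
    ‖cyclicContraction 𝕜 t (n + 1) x‖ ≤ n * ‖x‖ :=
  (cyclicContraction 𝕜 t (n + 1)).le_of_opNorm_le
    (norm_cyclicContraction_le (norm_pow_le_one_of_isometry ht) n) x

lemma apply_cyclicMean {t : V →L[𝕜] V} {m : ℕ} (ht : t ^ m = 1) (x : V) :
    t (cyclicMean 𝕜 t m x) = cyclicMean 𝕜 t m x :=
  DFunLike.congr_fun (mul_cyclicMean ht) x

lemma cyclicMean_apply_apply {t : V →L[𝕜] V} {m : ℕ} (ht : t ^ m = 1) (x : V) :
    cyclicMean 𝕜 t m (t x) = cyclicMean 𝕜 t m x :=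
  DFunLike.congr_fun (cyclicMean_mul (𝕜 := 𝕜) ht) x

lemma cyclicContraction_apply_sub {t : V →L[𝕜] V} {n : ℕ} (ht : t ^ (n + 1) = 1) (x : V) :
    cyclicContraction 𝕜 t (n + 1) (x - t x) = (2 : 𝕜) • (x - cyclicMean 𝕜 t (n + 1) x) :=
  DFunLike.congr_fun (cyclicContraction_mul_one_sub (𝕜 := 𝕜)
    (Nat.cast_ne_zero.2 n.succ_ne_zero) ht) x

lemma sub_apply_cyclicContraction {t : V →L[𝕜] V} {n : ℕ} (ht : t ^ (n + 1) = 1) (x : V) :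
    cyclicContraction 𝕜 t (n + 1) x - t (cyclicContraction 𝕜 t (n + 1) x) =
      (2 : 𝕜) • (x - cyclicMean 𝕜 t (n + 1) x) :=
  DFunLike.congr_fun (one_sub_mul_cyclicContraction (𝕜 := 𝕜)
    (Nat.cast_ne_zero.2 n.succ_ne_zero) ht) x

lemma cyclicMean_apply_eq_self {t : V →L[𝕜] V} {n : ℕ} (ht : t ^ (n + 1) = 1) {x : V}
    (hx : t x = x) : cyclicMean 𝕜 t (n + 1) x = x := by
  have h := cyclicContraction_apply_sub ht x
  rw [hx, sub_self, map_zero, eq_comm, smul_eq_zero_iff_right two_ne_zero, sub_eq_zero] at h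
  exact h.symm

lemma norm_sub_apply_le_of_isometry {t : V →L[𝕜] V} (ht : ∀ x, ‖t x‖ = ‖x‖) (x : V) :
    ‖x - t x‖ ≤ 2 * ‖x‖ := by
  simpa only [ht, two_mul] using norm_sub_le x (t x)

end CyclicOperatorApply

section Faces

variable {X B : Type*} [NonUnitalNormedRing B]

/-- The cyclic rotation `(aₙ, a₀, …, aₙ₋₁)` of a tuple, spelled as in `cycT`. -/
def cycRotate {n : ℕ} (a : Fin (n + 1) → X) : Fin (n + 1) → X :=
  fun i => a (i - 1)

lemma cycRotate_zero {n : ℕ} (a : Fin (n + 1) → X) : cycRotate a 0 = a (Fin.last n) := by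
  rw [cycRotate]
  congr 1
  ext
  simp

lemma cycRotate_succ {n : ℕ} (a : Fin (n + 1) → X) (i : Fin n) :
    cycRotate a i.succ = a i.castSucc := by
  rw [cycRotate]
  congr 1
  ext
  simp [Fin.coe_sub_one]

lemma hochFace_self {n : ℕ} (a : Fin (n + 2) → B) (j : Fin (n + 1)) :
    hochFace a j j = a j.castSucc * a j.succ := by
  simp [hochFace]

lemma hochFace_of_lt {n : ℕ} (a : Fin (n + 2) → B) {i j : Fin (n + 1)} (h : i < j) :
    hochFace a j i = a i.castSucc :=
  if_pos h

lemma hochFace_of_gt {n : ℕ} (a : Fin (n + 2) → B) {i j : Fin (n + 1)} (h : j < i) :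
    hochFace a j i = a i.succ := by
  rw [hochFace, if_neg (Fin.lt_def.1 h).not_gt, if_neg (Fin.val_ne_of_ne h.ne')]

lemma hochFace_of_ne {n : ℕ} (a : Fin (n + 2) → B) {i j : Fin (n + 1)} (h : i ≠ j) :
    hochFace a j i = a (j.castSucc.succAbove i) := by
  rcases h.lt_or_gt with h | h
  · rw [hochFace_of_lt a h, Fin.succAbove_of_castSucc_lt _ _ (Fin.castSucc_lt_castSucc_iff.2 h)]
  · rw [hochFace_of_gt a h, Fin.succAbove_of_le_castSucc _ _ (Fin.castSucc_le_castSucc_iff.2 h.le)]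

lemma hochFace_hochFace {n : ℕ} (a : Fin (n + 3) → B) {i j : Fin (n + 1)} (h : i ≤ j) :
    hochFace (hochFace a i.castSucc) j = hochFace (hochFace a j.succ) i := by
  rw [Fin.le_def] at h
  funext q
  simp only [hochFace, Fin.val_castSucc, Fin.val_succ, Fin.succ_castSucc]
  split_ifs <;> first | rfl | omega | rw [mul_assoc]

lemma hochFace_cycRotate_succ {n : ℕ} (a : Fin (n + 2) → B) (j : Fin n) :
    hochFace (cycRotate a) j.succ = cycRotate (hochFace a j.castSucc) := by
  funext i
  cases i using Fin.cases with
  | zero =>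
    rw [cycRotate_zero, hochFace_of_lt _ j.succ_pos, hochFace_of_gt _ j.castSucc_lt_last,
      Fin.castSucc_zero, cycRotate_zero, Fin.succ_last]
  | succ i =>
    simp only [hochFace, cycRotate_succ, Fin.val_succ, Fin.val_castSucc, add_lt_add_iff_right,
      add_left_inj, ← Fin.succ_castSucc]

lemma hochFace_cycRotate_cycRotate_zero {n : ℕ} (a : Fin (n + 2) → B) :
    hochFace (cycRotate (cycRotate a)) 0 = cycRotate (hochFace a (Fin.last n)) := by
  funext i
  cases i using Fin.cases with
  | zero =>
    rw [cycRotate_zero, hochFace_self, hochFace_self, Fin.castSucc_zero, cycRotate_zero,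
      cycRotate_succ, Fin.castSucc_zero, cycRotate_zero, ← Fin.succ_last, cycRotate_succ]
  | succ i =>
    rw [cycRotate_succ, hochFace_of_gt _ i.succ_pos, hochFace_of_lt _ i.castSucc_lt_last,
      cycRotate_succ, ← Fin.succ_castSucc, cycRotate_succ]

lemma hochFace_cycRotate_zero {n : ℕ} (a : Fin (n + 2) → B) :
    hochFace (cycRotate a) 0 =
      fun i => if i = 0 then a (Fin.last (n + 1)) * a 0 else a i.castSucc := by
  funext i
  cases i using Fin.cases with
  | zero =>
    rw [hochFace_self, Fin.castSucc_zero, cycRotate_zero, cycRotate_succ, if_pos rfl,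
      Fin.castSucc_zero]
  | succ i => rw [hochFace_of_gt _ i.succ_pos, cycRotate_succ, if_neg i.succ_ne_zero]

lemma prod_norm_hochFace_le {n : ℕ} (a : Fin (n + 2) → B) (j : Fin (n + 1)) :
    ∏ i, ‖hochFace a j i‖ ≤ ∏ i, ‖a i‖ := by
  rw [Fin.prod_univ_succAbove _ j, Fin.prod_univ_succAbove _ j.castSucc,
    Fin.prod_univ_succAbove _ j, Fin.succAbove_castSucc_self, hochFace_self, ← mul_assoc]
  simp only [hochFace_of_ne a (Fin.succAbove_ne j _)]
  gcongr
  exact norm_mul_le _ _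

lemma exists_hochFace_update_eq [IsScalarTower ℂ A A] [SMulCommClass ℂ A A] {n : ℕ}
    (a : Fin (n + 2) → A) (j : Fin (n + 1)) (i : Fin (n + 2)) :
    ∃ (p : Fin (n + 1)) (L : A →ₗ[ℂ] A), ∀ x,
      hochFace (Function.update a i x) j = Function.update (hochFace a j) p (L x) := by
  rcases Fin.eq_self_or_eq_succAbove j.castSucc i with rfl | ⟨p, rfl⟩
  · refine ⟨j, LinearMap.mulRight ℂ (a j.succ), fun x => funext fun q => ?_⟩
    rcases eq_or_ne q j with rfl | hq
    · simp [hochFace_self, Fin.castSucc_lt_succ.ne']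
    · simp [hochFace_of_ne _ hq, hq]
  rcases eq_or_ne p j with rfl | hp
  · refine ⟨p, LinearMap.mulLeft ℂ (a p.castSucc), fun x => funext fun q => ?_⟩
    rcases eq_or_ne q p with rfl | hq
    · simp [hochFace_self, Fin.castSucc_lt_succ.ne]
    · simp [hochFace_of_ne _ hq, hq, -Fin.succAbove_castSucc_self]
  · refine ⟨p, LinearMap.id, fun x => funext fun q => ?_⟩
    rcases eq_or_ne q j with rfl | hq
    · have hsucc : q.succ ≠ q.castSucc.succAbove p := by
        rw [← Fin.succAbove_castSucc_self]
        exact Fin.succAbove_right_injective.ne hp.symm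
      simp [hochFace_self, hp.symm, hsucc]
    · simp [hochFace_of_ne _ hq, Function.update_apply]

end Faces

lemma sum_sum_eq_zero_of_simplicial {M : Type*} [AddCommGroup M] {n : ℕ}
    (G : Fin (n + 2) → Fin (n + 1) → M)
    (hG : ∀ i j : Fin (n + 1), i ≤ j → G j.succ i = -G i.castSucc j) :
    ∑ i, ∑ j, G i j = 0 := by
  induction n with
  | zero => simpa [Fin.sum_univ_two, add_eq_zero_iff_neg_eq] using (hG 0 0 le_rfl).symm
  | succ n ih =>
    have hinner : ∑ i : Fin (n + 2), ∑ j : Fin (n + 1), G i.castSucc j.castSucc = 0 :=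
      ih _ fun i j hij => hG i.castSucc j.castSucc hij
    have hlast : ∀ i, G (Fin.last (n + 2)) i = -G i.castSucc (Fin.last (n + 1)) := fun i => by
      rw [← Fin.succ_last, hG i _ i.le_last]
    rw [Fin.sum_univ_castSucc]
    simp only [Fin.sum_univ_castSucc (fun j => G (Fin.castSucc _) j), Finset.sum_add_distrib,
      hinner, hlast, Finset.sum_neg_distrib, zero_add, add_neg_cancel]

namespace Coch

/-- The signed cyclic shift `t` as a bounded operator; see `coe_cyclicShift`. -/
noncomputable def cyclicShift (n : ℕ) : Coch A n →L[ℂ] Coch A n :=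
  (-1 : ℂ) ^ n • (ContinuousMultilinearMap.domDomCongrₗᵢ ℂ A ℂ
    (Equiv.subRight (1 : Fin (n + 1)))).toContinuousLinearEquiv.toContinuousLinearMap

lemma cyclicShift_apply {n : ℕ} (φ : Coch A n) (a : Fin (n + 1) → A) :
    cyclicShift n φ a = (-1) ^ n * φ (cycRotate a) :=
  rfl

lemma coe_cyclicShift {n : ℕ} (φ : Coch A n) : ⇑(cyclicShift n φ) = cycT n φ :=
  rfl

lemma coe_cyclicShift_pow {n : ℕ} (k : ℕ) (φ : Coch A n) :
    ⇑((cyclicShift n ^ k) φ) = (cycT n)^[k] φ := by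
  induction k with
  | zero => rfl
  | succ k ih =>
    rw [pow_succ', mul_apply_eq_comp, coe_cyclicShift, ih, Function.iterate_succ_apply']

lemma cyclicShift_pow_apply {n : ℕ} (k : ℕ) (φ : Coch A n) (a : Fin (n + 1) → A) :
    (cyclicShift n ^ k) φ a = ((-1) ^ n) ^ k * φ (fun i => a (i - k • (1 : Fin (n + 1)))) := by
  induction k generalizing a with
  | zero => simp
  | succ k ih =>
    rw [pow_succ', mul_apply_eq_comp, cyclicShift_apply, ih, pow_succ', mul_assoc]
    simp only [cycRotate, succ_nsmul, sub_sub]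

lemma cyclicShift_pow_eq_one (n : ℕ) :
    (cyclicShift n : Coch A n →L[ℂ] Coch A n) ^ (n + 1) = 1 := by
  have hn : (n + 1) • (1 : Fin (n + 1)) = 0 := by
    simpa using card_nsmul_eq_zero (x := (1 : Fin (n + 1)))
  ext φ a
  rw [cyclicShift_pow_apply, hn, ← pow_mul, (Nat.even_mul_succ_self n).neg_one_pow, one_mul]
  exact congrArg φ (funext fun i => congrArg a (sub_zero i))

lemma norm_cyclicShift_apply {n : ℕ} (φ : Coch A n) : ‖cyclicShift n φ‖ = ‖φ‖ := by
  simp [cyclicShift, norm_smul]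

/-- The projection `N` onto the cyclic cochains as a bounded operator. -/
noncomputable abbrev mean (n : ℕ) : Coch A n →L[ℂ] Coch A n :=
  cyclicMean ℂ (cyclicShift n) (n + 1)

/-- The operator `h` as a bounded operator. -/
noncomputable abbrev contraction (n : ℕ) : Coch A n →L[ℂ] Coch A n :=
  cyclicContraction ℂ (cyclicShift n) (n + 1)

lemma coe_mean {n : ℕ} (φ : Coch A n) : ⇑(mean n φ) = cycN n φ := by
  funext a
  simp [cyclicMean, cycN, ← coe_cyclicShift_pow]

lemma coe_contraction {n : ℕ} (φ : Coch A n) : ⇑(contraction n φ) = cycH n φ := by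
  funext a
  simp [cyclicContraction, cycH, ← coe_cyclicShift_pow]

lemma cyclicShift_mean {n : ℕ} (φ : Coch A n) : cyclicShift n (mean n φ) = mean n φ :=
  apply_cyclicMean (cyclicShift_pow_eq_one n) φ

lemma mean_cyclicShift {n : ℕ} (φ : Coch A n) : mean n (cyclicShift n φ) = mean n φ :=
  cyclicMean_apply_apply (cyclicShift_pow_eq_one n) φ

lemma mean_eq_self {n : ℕ} {φ : Coch A n} (hφ : cyclicShift n φ = φ) : mean n φ = φ :=
  cyclicMean_apply_eq_self (cyclicShift_pow_eq_one n) hφ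

lemma contraction_sub_cyclicShift {n : ℕ} (φ : Coch A n) :
    contraction n (φ - cyclicShift n φ) = (2 : ℂ) • (φ - mean n φ) :=
  cyclicContraction_apply_sub (cyclicShift_pow_eq_one n) φ

lemma contraction_sub_cyclicShift_contraction {n : ℕ} (φ : Coch A n) :
    contraction n φ - cyclicShift n (contraction n φ) = (2 : ℂ) • (φ - mean n φ) :=
  sub_apply_cyclicContraction (cyclicShift_pow_eq_one n) φ

lemma norm_mean_apply_le {n : ℕ} (φ : Coch A n) : ‖mean n φ‖ ≤ ‖φ‖ :=
  norm_cyclicMean_apply_le norm_cyclicShift_apply (n + 1) φ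

lemma norm_contraction_apply_le {n : ℕ} (φ : Coch A n) : ‖contraction n φ‖ ≤ n * ‖φ‖ :=
  norm_cyclicContraction_apply_le norm_cyclicShift_apply n φ

lemma norm_inv_two_smul_mean_le {n : ℕ} (φ : Coch A n) :
    ‖(2 : ℂ)⁻¹ • mean n φ‖ ≤ 2⁻¹ * ‖φ‖ := by
  rw [norm_smul, norm_inv, RCLike.norm_ofNat]
  exact mul_le_mul_of_nonneg_left (norm_mean_apply_le φ) (by norm_num)

lemma norm_apply_hochFace_le {n : ℕ} (φ : Coch A n) (a : Fin (n + 2) → A) (j : Fin (n + 1)) :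
    ‖φ (hochFace a j)‖ ≤ ‖φ‖ * ∏ i, ‖a i‖ :=
  (φ.le_opNorm _).trans
    (mul_le_mul_of_nonneg_left (prod_norm_hochFace_le a j) (norm_nonneg φ))

variable [IsScalarTower ℂ A A] [SMulCommClass ℂ A A]

/-- The `j`-th term `φ ↦ (-1)ʲ φ(a₀, …, aⱼaⱼ₊₁, …, aₙ₊₁)` of `δ'` as a bounded operator. Carrying
the sign makes its commutation relations with the (signed) cyclic shift sign-free. -/
noncomputable def signedFace (n : ℕ) (j : Fin (n + 1)) : Coch A n →L[ℂ] Coch A (n + 1) :=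
  MultilinearMap.mkContinuousLinear
    { toFun φ := MultilinearMap.mk' (fun a => (-1) ^ (j : ℕ) * φ (hochFace a j))
        (fun a i x y => by
          obtain ⟨p, L, hL⟩ := exists_hochFace_update_eq a j i
          simp only [hL, map_add, φ.map_update_add, mul_add])
        (fun a i c x => by
          obtain ⟨p, L, hL⟩ := exists_hochFace_update_eq a j i
          simp only [hL, map_smul, φ.map_update_smul, mul_smul_comm])
      map_add' φ φ' := by ext a; simp [mul_add]
      map_smul' c φ := by ext a; simp [mul_left_comm] }
    1 fun φ a => by
      simpa using norm_apply_hochFace_le φ a j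

lemma signedFace_apply {n : ℕ} (j : Fin (n + 1)) (φ : Coch A n) (a : Fin (n + 2) → A) :
    signedFace n j φ a = (-1) ^ (j : ℕ) * φ (hochFace a j) :=
  rfl

lemma norm_signedFace_apply_le {n : ℕ} (j : Fin (n + 1)) (φ : Coch A n) :
    ‖signedFace n j φ‖ ≤ ‖φ‖ := by
  refine ContinuousMultilinearMap.opNorm_le_bound (norm_nonneg φ) fun a => ?_
  rw [signedFace_apply, norm_mul, norm_pow, norm_neg, norm_one, one_pow, one_mul]
  exact norm_apply_hochFace_le φ a j

lemma signedFace_signedFace {n : ℕ} (φ : Coch A n) {i j : Fin (n + 1)} (h : i ≤ j) :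
    signedFace (n + 1) j.succ (signedFace n i φ) =
      -signedFace (n + 1) i.castSucc (signedFace n j φ) := by
  ext a
  rw [neg_apply]
  simp only [signedFace_apply, hochFace_hochFace a h, Fin.val_succ, Fin.val_castSucc]
  ring

lemma cyclicShift_signedFace_succ {n : ℕ} (j : Fin n) (φ : Coch A n) :
    cyclicShift (n + 1) (signedFace n j.succ φ) = signedFace n j.castSucc (cyclicShift n φ) := by
  ext a
  simp only [cyclicShift_apply, signedFace_apply, hochFace_cycRotate_succ, Fin.val_succ,
    Fin.val_castSucc]
  ring

lemma cyclicShift_cyclicShift_signedFace_zero {n : ℕ} (φ : Coch A n) :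
    cyclicShift (n + 1) (cyclicShift (n + 1) (signedFace n 0 φ)) =
      signedFace n (Fin.last n) (cyclicShift n φ) := by
  ext a
  simp only [cyclicShift_apply, signedFace_apply, hochFace_cycRotate_cycRotate_zero, Fin.val_zero,
    Fin.val_last]
  ring

/-- The truncated Hochschild coboundary `δ'` as a bounded operator. -/
noncomputable def truncatedDelta (n : ℕ) : Coch A n →L[ℂ] Coch A (n + 1) :=
  ∑ j, signedFace n j

/-- The Hochschild coboundary `δ` as a bounded operator; its last term, which multiplies the last
argument into the first one, is `t` applied to the zeroth face. -/
noncomputable def delta (n : ℕ) : Coch A n →L[ℂ] Coch A (n + 1) :=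
  truncatedDelta n + cyclicShift (n + 1) ∘L signedFace n 0

lemma truncatedDelta_apply {n : ℕ} (φ : Coch A n) :
    truncatedDelta n φ = ∑ j, signedFace n j φ := by
  simp [truncatedDelta]

lemma delta_apply {n : ℕ} (φ : Coch A n) :
    delta n φ = truncatedDelta n φ + cyclicShift (n + 1) (signedFace n 0 φ) :=
  rfl

lemma coe_truncatedDelta {n : ℕ} (φ : Coch A n) : ⇑(truncatedDelta n φ) = hochDelta' n φ := by
  funext a
  simp [truncatedDelta_apply, signedFace_apply, hochDelta']

lemma coe_delta {n : ℕ} (φ : Coch A n) : ⇑(delta n φ) = hochDelta n φ := by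
  funext a
  rw [delta_apply, hochDelta, ← coe_truncatedDelta, ← hochFace_cycRotate_zero, add_apply,
    cyclicShift_apply, signedFace_apply, Fin.val_zero, pow_zero, one_mul]

lemma norm_delta_apply_le {n : ℕ} (φ : Coch A n) : ‖delta n φ‖ ≤ (n + 2) * ‖φ‖ := by
  have htrunc : ‖truncatedDelta n φ‖ ≤ (n + 1) * ‖φ‖ := by
    rw [truncatedDelta_apply]
    simpa using norm_sum_le_of_le Finset.univ fun j _ => norm_signedFace_apply_le j φ
  calc ‖delta n φ‖ ≤ (n + 1) * ‖φ‖ + ‖φ‖ :=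
        norm_add_le_of_le htrunc
          ((norm_cyclicShift_apply _).trans_le (norm_signedFace_apply_le 0 φ))
    _ = (n + 2) * ‖φ‖ := by ring

lemma delta_sub_cyclicShift_delta {n : ℕ} (φ : Coch A n) :
    delta n φ - cyclicShift (n + 1) (delta n φ) = truncatedDelta n (φ - cyclicShift n φ) := by
  have hshift : cyclicShift (n + 1) (truncatedDelta n φ) =
      cyclicShift (n + 1) (signedFace n 0 φ) +
        ∑ j : Fin n, signedFace n j.castSucc (cyclicShift n φ) := by
    simp only [truncatedDelta_apply, map_sum, Fin.sum_univ_succ, map_add,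
      cyclicShift_signedFace_succ]
  rw [delta_apply, map_add, map_sub, hshift, cyclicShift_cyclicShift_signedFace_zero,
    truncatedDelta_apply (cyclicShift n φ), Fin.sum_univ_castSucc]
  abel

lemma truncatedDelta_truncatedDelta {n : ℕ} (φ : Coch A n) :
    truncatedDelta (n + 1) (truncatedDelta n φ) = 0 := by
  simp only [truncatedDelta_apply, map_sum]
  rw [Finset.sum_comm]
  exact sum_sum_eq_zero_of_simplicial (fun i j => signedFace (n + 1) i (signedFace n j φ))
    fun _ _ => signedFace_signedFace φ

lemma signedFace_cyclicShift_signedFace_zero {n : ℕ} (j : Fin (n + 1)) (φ : Coch A n) :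
    signedFace (n + 1) j.castSucc (cyclicShift (n + 1) (signedFace n 0 φ)) =
      -cyclicShift (n + 2) (signedFace (n + 1) 0 (signedFace n j φ)) := by
  rw [← cyclicShift_signedFace_succ, signedFace_signedFace φ j.zero_le, map_neg,
    Fin.castSucc_zero]

lemma delta_delta {n : ℕ} (φ : Coch A n) : delta (n + 1) (delta n φ) = 0 := by
  have htrunc : truncatedDelta (n + 1) (cyclicShift (n + 1) (signedFace n 0 φ)) =
      -cyclicShift (n + 2) (signedFace (n + 1) 0 (truncatedDelta n φ)) +
        cyclicShift (n + 2) (cyclicShift (n + 2) (signedFace (n + 1) 0 (signedFace n 0 φ))) := by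
    rw [truncatedDelta_apply, Fin.sum_univ_castSucc, cyclicShift_cyclicShift_signedFace_zero,
      truncatedDelta_apply, map_sum, map_sum, ← Finset.sum_neg_distrib]
    simp only [signedFace_cyclicShift_signedFace_zero]
  have hface := signedFace_cyclicShift_signedFace_zero 0 φ
  rw [Fin.castSucc_zero] at hface
  rw [delta_apply, delta_apply, map_add, map_add, map_add, truncatedDelta_truncatedDelta, htrunc,
    hface, map_neg]
  abel

lemma cyclicShift_delta_of_cyclic {n : ℕ} {φ : Coch A n} (hφ : cyclicShift n φ = φ) :
    cyclicShift (n + 1) (delta n φ) = delta n φ := by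
  have h := delta_sub_cyclicShift_delta φ
  rw [hφ, sub_self, map_zero, sub_eq_zero] at h
  exact h.symm

lemma mean_signedFace_of_cyclic {n : ℕ} (j : Fin (n + 1)) {φ : Coch A n}
    (hφ : cyclicShift n φ = φ) :
    mean (n + 1) (signedFace n j φ) = mean (n + 1) (signedFace n 0 φ) := by
  induction j using Fin.induction with
  | zero => rfl
  | succ j ih => rw [← mean_cyclicShift, cyclicShift_signedFace_succ, hφ, ih]

lemma mean_truncatedDelta_of_cyclic {n : ℕ} {φ : Coch A n} (hφ : cyclicShift n φ = φ) :
    mean (n + 1) (truncatedDelta n φ) = (n + 1) • mean (n + 1) (signedFace n 0 φ) := by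
  rw [truncatedDelta_apply, map_sum,
    Finset.sum_congr rfl fun j _ => mean_signedFace_of_cyclic j hφ, Finset.sum_const,
    Finset.card_univ, Fintype.card_fin]

lemma delta_eq_zero_of_truncatedDelta_eq {n : ℕ} {φ : Coch A n} (hφ : cyclicShift n φ = φ)
    {η : Coch A (n + 1)} (hη : truncatedDelta n φ = η - cyclicShift (n + 1) η) :
    delta n φ = 0 := by
  have htrunc : mean (n + 1) (truncatedDelta n φ) = 0 := by
    rw [hη, map_sub, mean_cyclicShift, sub_self]
  have hface : mean (n + 1) (signedFace n 0 φ) = 0 := by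
    rwa [mean_truncatedDelta_of_cyclic hφ, ← Nat.cast_smul_eq_nsmul ℂ,
      smul_eq_zero_iff_right (Nat.cast_ne_zero.2 n.succ_ne_zero)] at htrunc
  rw [← mean_eq_self (cyclicShift_delta_of_cyclic hφ), delta_apply, map_add, mean_cyclicShift,
    htrunc, hface, add_zero]

/-- The cochain `θ - ½ δhρ`. It has the same coboundary as `θ`, and if `δ'ρ = (1 - t)θ` then
passing to it replaces `ρ` by the cyclic cochain `Nρ`. -/
noncomputable def correctedPrimitive {n : ℕ} (ρ : Coch A n) (θ : Coch A (n + 1)) :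
    Coch A (n + 1) :=
  θ - (2 : ℂ)⁻¹ • delta n (contraction n ρ)

lemma delta_correctedPrimitive {n : ℕ} (ρ : Coch A n) (θ : Coch A (n + 1)) :
    delta (n + 1) (correctedPrimitive ρ θ) = delta (n + 1) θ := by
  rw [correctedPrimitive, ← map_smul, map_sub, delta_delta, sub_zero]

lemma truncatedDelta_mean_eq_correctedPrimitive_sub {n : ℕ} {ρ : Coch A n} {θ : Coch A (n + 1)}
    (hρθ : truncatedDelta n ρ = θ - cyclicShift (n + 1) θ) :
    truncatedDelta n (mean n ρ) =
      correctedPrimitive ρ θ - cyclicShift (n + 1) (correctedPrimitive ρ θ) := by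
  have hdelta : delta n (contraction n ρ) - cyclicShift (n + 1) (delta n (contraction n ρ)) =
      (2 : ℂ) • (truncatedDelta n ρ - truncatedDelta n (mean n ρ)) := by
    rw [delta_sub_cyclicShift_delta, contraction_sub_cyclicShift_contraction, map_smul, map_sub]
  calc truncatedDelta n (mean n ρ)
      = truncatedDelta n ρ - (2 : ℂ)⁻¹ •
          (delta n (contraction n ρ) - cyclicShift (n + 1) (delta n (contraction n ρ))) := by
        rw [hdelta, inv_smul_smul₀ two_ne_zero, sub_sub_cancel]
    _ = correctedPrimitive ρ θ - cyclicShift (n + 1) (correctedPrimitive ρ θ) := by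
        rw [hρθ, correctedPrimitive, map_sub, map_smul, smul_sub]
        abel

lemma norm_correctedPrimitive_le {n : ℕ} (ρ : Coch A n) (θ : Coch A (n + 1)) :
    ‖correctedPrimitive ρ θ‖ ≤ ‖θ‖ + (n + 2) * n / 2 * ‖ρ‖ := by
  have hdelta : ‖delta n (contraction n ρ)‖ ≤ (n + 2) * (n * ‖ρ‖) :=
    (norm_delta_apply_le _).trans
      (mul_le_mul_of_nonneg_left (norm_contraction_apply_le ρ) (by positivity))
  refine norm_sub_le_of_le le_rfl ?_
  rw [norm_smul, norm_inv, RCLike.norm_ofNat]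
  linarith

/-- The shift map `S̃` as a bounded operator. -/
noncomputable def shift (n : ℕ) : Coch A n →L[ℂ] Coch A (n + 2) :=
  mean (n + 2) ∘L delta (n + 1) ∘L contraction (n + 1) ∘L truncatedDelta n

lemma shift_apply {n : ℕ} (φ : Coch A n) :
    shift n φ = mean (n + 2) (delta (n + 1) (contraction (n + 1) (truncatedDelta n φ))) :=
  rfl

lemma coe_shift {n : ℕ} (φ : Coch A n) : ⇑(shift n φ) = cycS n φ := by
  rw [shift_apply, coe_mean, coe_delta, coe_contraction, coe_truncatedDelta, cycS]

lemma shift_inv_two_smul_of_truncatedDelta_eq {n : ℕ} {φ : Coch A n} {η : Coch A (n + 1)}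
    (hη : truncatedDelta n φ = η - cyclicShift (n + 1) η) :
    shift n ((2 : ℂ)⁻¹ • φ) = mean (n + 2) (delta (n + 1) η) - delta (n + 1) (mean (n + 1) η) := by
  rw [map_smul, shift_apply, hη, contraction_sub_cyclicShift, map_smul, map_smul,
    inv_smul_smul₀ two_ne_zero, map_sub, map_sub,
    mean_eq_self (cyclicShift_delta_of_cyclic (cyclicShift_mean η))]

lemma truncatedDelta_sub_cyclicShift_eq_zero {n : ℕ} {θ : Coch A n}
    (hθ : cyclicShift (n + 1) (delta n θ) = delta n θ) :
    truncatedDelta n (θ - cyclicShift n θ) = 0 := by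
  rw [← delta_sub_cyclicShift_delta, hθ, sub_self]

lemma norm_mean_correctedPrimitive_le {n : ℕ} {ρ : Coch A n} {θ : Coch A (n + 1)} {c₁ c₂ M : ℝ}
    (hc₂ : 1 ≤ c₂) (hθ : ‖θ‖ ≤ c₁ * M) (hρ : ‖ρ‖ ≤ 2 * (c₁ * c₂ * M)) :
    ‖mean (n + 1) (correctedPrimitive ρ θ)‖ ≤ ((n : ℝ) + 1) ^ 2 * c₁ * c₂ * M := by
  have hθ' : ‖θ‖ ≤ c₁ * c₂ * M :=
    calc ‖θ‖ ≤ c₁ * M := hθ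
      _ ≤ c₁ * M * c₂ := le_mul_of_one_le_right ((norm_nonneg θ).trans hθ) hc₂
      _ = c₁ * c₂ * M := by ring
  calc ‖mean (n + 1) (correctedPrimitive ρ θ)‖ ≤ ‖θ‖ + (n + 2) * n / 2 * ‖ρ‖ :=
        (norm_mean_apply_le _).trans (norm_correctedPrimitive_le ρ θ)
    _ ≤ c₁ * c₂ * M + (n + 2) * n / 2 * (2 * (c₁ * c₂ * M)) :=
        add_le_add hθ' (mul_le_mul_of_nonneg_left hρ (by positivity))
    _ = ((n : ℝ) + 1) ^ 2 * c₁ * c₂ * M := by ring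

lemma delta_eq_shift_add_delta_mean {n : ℕ} {ρ : Coch A n} {θ : Coch A (n + 1)}
    (hθ : cyclicShift (n + 2) (delta (n + 1) θ) = delta (n + 1) θ)
    (hρθ : truncatedDelta n ρ = θ - cyclicShift (n + 1) θ) :
    delta (n + 1) θ = shift n ((2 : ℂ)⁻¹ • mean n ρ) +
      delta (n + 1) (mean (n + 1) (correctedPrimitive ρ θ)) := by
  rw [shift_inv_two_smul_of_truncatedDelta_eq
      (truncatedDelta_mean_eq_correctedPrimitive_sub hρθ),
    delta_correctedPrimitive, mean_eq_self hθ, sub_add_cancel]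

lemma delta_inv_two_smul_mean_eq_zero {n : ℕ} {ρ : Coch A n} {θ : Coch A (n + 1)}
    (hρθ : truncatedDelta n ρ = θ - cyclicShift (n + 1) θ) :
    delta n ((2 : ℂ)⁻¹ • mean n ρ) = 0 := by
  rw [map_smul, delta_eq_zero_of_truncatedDelta_eq (cyclicShift_mean ρ)
    (truncatedDelta_mean_eq_correctedPrimitive_sub hρθ)]
  exact smul_zero (A := Coch A (n + 1)) (2 : ℂ)⁻¹

end Coch

lemma exists_bounded_primitive_of_homotopy {k : ℕ}
    {d : ((Fin (k + 1) → A) → ℂ) → (Fin (k + 2) → A) → ℂ}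
    {d' : ((Fin (k + 2) → A) → ℂ) → (Fin (k + 3) → A) → ℂ}
    {s : Coch A (k + 1) →L[ℂ] Coch A k} {s' : Coch A (k + 2) →L[ℂ] Coch A (k + 1)} {c : ℝ}
    (hs : ‖s‖ ≤ c)
    (hhomotopy : ∀ (ψ : Coch A (k + 1)) (dψ : Coch A (k + 2)), ⇑dψ = d' ψ →
      d (s ψ) + ⇑(s' dψ) = ψ)
    (ψ : Coch A (k + 1)) (hψ : d' ψ = 0) :
    ∃ θ : Coch A k, d θ = ψ ∧ ‖θ‖ ≤ c * ‖ψ‖ := by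
  refine ⟨s ψ, ?_, s.le_of_opNorm_le hs ψ⟩
  rw [← hhomotopy ψ 0 hψ.symm, map_zero]
  exact (add_zero _).symm

open Coch in
theorem cyclic_cocycle_eq_shift_plus_coboundary_of_homotopies_general
    [IsScalarTower ℂ A A] [SMulCommClass ℂ A A] {c₁ c₂ : ℝ} (hc₂1 : 1 ≤ c₂) {n : ℕ}
    (hδ : ∀ ψ : Coch A (n + 2), hochDelta (n + 2) ψ = 0 →
      ∃ θ : Coch A (n + 1), hochDelta (n + 1) θ = ψ ∧ ‖θ‖ ≤ c₁ * ‖ψ‖)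
    (hδ' : ∀ κ : Coch A (n + 1), hochDelta' (n + 1) κ = 0 →
      ∃ ρ : Coch A n, hochDelta' n ρ = κ ∧ ‖ρ‖ ≤ c₂ * ‖κ‖)
    {ψ : Coch A (n + 2)} (hcyc : cycT (n + 2) ψ = ψ) (hcocycle : hochDelta (n + 2) ψ = 0) :
    ∃ (χ : Coch A (n + 1)) (φ : Coch A n),
      cycT (n + 1) χ = χ ∧
      cycT n φ = φ ∧
      hochDelta n φ = 0 ∧
      ⇑ψ = cycS n φ + hochDelta (n + 1) χ ∧
      ‖χ‖ ≤ ((n : ℝ) + 1) ^ 2 * c₁ * c₂ * ‖ψ‖ ∧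
      ‖φ‖ ≤ c₁ * c₂ * ‖ψ‖ := by
  obtain ⟨θ, hθψ, hθ⟩ := hδ ψ hcocycle
  rw [← coe_delta, DFunLike.coe_fn_eq] at hθψ
  have hψ : cyclicShift (n + 2) (delta (n + 1) θ) = delta (n + 1) θ := by
    rw [hθψ]
    exact DFunLike.coe_injective hcyc
  obtain ⟨ρ, hρθ, hρ⟩ := hδ' (θ - cyclicShift (n + 1) θ) (by
    rw [← coe_truncatedDelta, truncatedDelta_sub_cyclicShift_eq_zero hψ]
    rfl)
  rw [← coe_truncatedDelta, DFunLike.coe_fn_eq] at hρθ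
  have hρ_le : ‖ρ‖ ≤ 2 * (c₁ * c₂ * ‖ψ‖) :=
    calc ‖ρ‖ ≤ c₂ * ‖θ - cyclicShift (n + 1) θ‖ := hρ
      _ ≤ c₂ * (2 * (c₁ * ‖ψ‖)) := mul_le_mul_of_nonneg_left
          ((norm_sub_apply_le_of_isometry norm_cyclicShift_apply θ).trans
            (mul_le_mul_of_nonneg_left hθ zero_le_two)) (zero_le_one.trans hc₂1)
      _ = 2 * (c₁ * c₂ * ‖ψ‖) := by ring
  refine ⟨mean (n + 1) (correctedPrimitive ρ θ), (2 : ℂ)⁻¹ • mean n ρ, ?_, ?_, ?_, ?_, ?_, ?_⟩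
  · rw [← coe_cyclicShift, cyclicShift_mean]
  · rw [← coe_cyclicShift, map_smul, cyclicShift_mean]
  · rw [← coe_delta, delta_inv_two_smul_mean_eq_zero hρθ]
    rfl
  · rw [← coe_shift, ← coe_delta, ← hθψ]
    exact congrArg DFunLike.coe (delta_eq_shift_add_delta_mean hψ hρθ)
  · exact norm_mean_correctedPrimitive_le hc₂1 hθ hρ_le
  · linarith [norm_inv_two_smul_mean_le ρ]

/-- Proposition 2.7 of the paper. Under the homotopy
conditions with constants `c₁, c₂`, every cyclic `(n+2)`-cocycle `ψ` can be
written as `S̃φ + δχ` with `φ` a cyclic `n`-cocycle, `χ` a cyclic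
`(n+1)`-cochain, `‖χ‖ ≤ (n+1)²c₁c₂‖ψ‖` and `‖φ‖ ≤ c₁c₂‖ψ‖`. -/
theorem cyclic_cocycle_eq_shift_plus_coboundary_of_homotopies
    {A : Type*} [NonUnitalNormedRing A] [NormedSpace ℂ A]
    [IsScalarTower ℂ A A] [SMulCommClass ℂ A A] [CompleteSpace A]
    (σ σ' : ∀ n : ℕ, Coch A (n + 1) →L[ℂ] Coch A n)
    (hσ : ∀ (k : ℕ) (ψ : Coch A (k + 1)) (dψ : Coch A (k + 2)),
      ⇑dψ = hochDelta (k + 1) ⇑ψ →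
      hochDelta k ⇑(σ k ψ) + ⇑(σ (k + 1) dψ) = ⇑ψ)
    (hσ' : ∀ (k : ℕ) (ψ : Coch A (k + 1)) (dψ : Coch A (k + 2)),
      ⇑dψ = hochDelta' (k + 1) ⇑ψ →
      hochDelta' k ⇑(σ' k ψ) + ⇑(σ' (k + 1) dψ) = ⇑ψ)
    (hσ'0 : ∀ (ψ : Coch A 0) (dψ : Coch A 1),
      ⇑dψ = hochDelta' 0 ⇑ψ → σ' 0 dψ = ψ)
    (c₁ c₂ : ℝ) (hc₁ : ∀ n, ‖σ n‖ ≤ c₁) (hc₂ : ∀ n, ‖σ' n‖ ≤ c₂) (hc₂1 : 1 ≤ c₂)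
    (n : ℕ) (ψ : Coch A (n + 2))
    (hcyc : cycT (n + 2) ⇑ψ = ⇑ψ)
    (hcocycle : hochDelta (n + 2) ⇑ψ = 0) :
    ∃ (χ : Coch A (n + 1)) (φ : Coch A n),
      cycT (n + 1) ⇑χ = ⇑χ ∧
      cycT n ⇑φ = ⇑φ ∧
      hochDelta n ⇑φ = 0 ∧
      ⇑ψ = cycS n ⇑φ + hochDelta (n + 1) ⇑χ ∧
      ‖χ‖ ≤ ((n : ℝ) + 1) ^ 2 * c₁ * c₂ * ‖ψ‖ ∧
      ‖φ‖ ≤ c₁ * c₂ * ‖ψ‖ := by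
  exact cyclic_cocycle_eq_shift_plus_coboundary_of_homotopies_general hc₂1
    (exists_bounded_primitive_of_homotopy (hc₁ (n + 1)) (hσ (n + 1)))
    (exists_bounded_primitive_of_homotopy (hc₂ n) (hσ' n)) hcyc hcocycle
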